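/- Let e₀ ∈ 𝓞_K^{n+1} satisfy B(e₀,e₀) > 0. Then every h ∈ O_F(𝓞_K) that is congruent to the identity modulo 2·B(e₀,e₀) satisfies |σ₁(B(h·e₀, e₀))| ≥ σ₁(B(e₀,e₀)), and consequently B(h·e₀, e₀)² ≥ B(h·e₀, h·e₀)·B(e₀,e₀). -/

import Mathlib

open scoped Matrix

noncomputable section

/-- The bilinear form `B(u,v) = uᵀ F v` associated to a matrix `F`. -/
def bilinForm {m : ℕ} {R : Type*} [CommRing R] (F : Matrix (Fin m) (Fin m) R)
    (u v : Fin m → R) : R :=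
  dotProduct u (F.mulVec v)

/-- The orthogonal group of the bilinear form with matrix `F`, as a subgroup of `GL`. -/
def orthogonalSubgroup {m : ℕ} {R : Type*} [CommRing R] (F : Matrix (Fin m) (Fin m) R) :
    Subgroup (GL (Fin m) R) where
  carrier := {h | ((h : Matrix (Fin m) (Fin m) R))ᵀ * F * (h : Matrix (Fin m) (Fin m) R) = F}
  one_mem' := by simp
  mul_mem' := by
    intro a b ha hb
    simp only [Set.mem_setOf_eq, Units.val_mul, Matrix.transpose_mul] at *
    calc (b : Matrix (Fin m) (Fin m) R)ᵀ * (a : Matrix (Fin m) (Fin m) R)ᵀ * F *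
          ((a : Matrix (Fin m) (Fin m) R) * (b : Matrix (Fin m) (Fin m) R))
        = (b : Matrix (Fin m) (Fin m) R)ᵀ *
            ((a : Matrix (Fin m) (Fin m) R)ᵀ * F * (a : Matrix (Fin m) (Fin m) R)) *
            (b : Matrix (Fin m) (Fin m) R) := by
          simp only [Matrix.mul_assoc]
      _ = F := by rw [ha]; exact hb
  inv_mem' := by
    intro a ha
    simp only [Set.mem_setOf_eq] at *
    have h1 : (a : Matrix (Fin m) (Fin m) R) *
        ((a⁻¹ : GL (Fin m) R) : Matrix (Fin m) (Fin m) R) = 1 := by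
      rw [← Units.val_mul, mul_inv_cancel, Units.val_one]
    calc ((a⁻¹ : GL (Fin m) R) : Matrix (Fin m) (Fin m) R)ᵀ * F *
          ((a⁻¹ : GL (Fin m) R) : Matrix (Fin m) (Fin m) R)
        = ((a⁻¹ : GL (Fin m) R) : Matrix (Fin m) (Fin m) R)ᵀ *
            ((a : Matrix (Fin m) (Fin m) R)ᵀ * F * (a : Matrix (Fin m) (Fin m) R)) *
            ((a⁻¹ : GL (Fin m) R) : Matrix (Fin m) (Fin m) R) := by rw [ha]
      _ = ((a : Matrix (Fin m) (Fin m) R) *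
            ((a⁻¹ : GL (Fin m) R) : Matrix (Fin m) (Fin m) R))ᵀ * F *
            ((a : Matrix (Fin m) (Fin m) R) *
              ((a⁻¹ : GL (Fin m) R) : Matrix (Fin m) (Fin m) R)) := by
          simp only [Matrix.transpose_mul, Matrix.mul_assoc]
      _ = F := by rw [h1]; simp

/-- The real embedding of `𝓞 K` induced by a real embedding `σ` of `K`. -/
def embOK {K : Type*} [Field K] [NumberField K] (σ : K →+* ℝ) :
    NumberField.RingOfIntegers K →+* ℝ :=
  σ.comp (algebraMap (NumberField.RingOfIntegers K) K)

/-- `u` is a `K`-scalar multiple of `v` (both viewed as vectors in `K^m`). -/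
def IsKScalarMultiple {K : Type*} [Field K] [NumberField K] {m : ℕ}
    (u v : Fin m → NumberField.RingOfIntegers K) : Prop :=
  ∃ c : K, (fun t => algebraMap (NumberField.RingOfIntegers K) K (u t)) =
    c • (fun t => algebraMap (NumberField.RingOfIntegers K) K (v t))


theorem aux_map_bilin {m : ℕ} {R S : Type*} [CommRing R] [CommRing S] (f : R →+* S)
    (F : Matrix (Fin m) (Fin m) R) (u v : Fin m → R) :
    f (bilinForm F u v) = dotProduct (f ∘ u) ((F.map f).mulVec (f ∘ v)) := by
  simp [bilinForm, dotProduct, Matrix.mulVec, map_sum]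

theorem aux_nonneg {m : ℕ} {R : Type*} [CommRing R] (f : R →+* ℝ)
    (F : Matrix (Fin m) (Fin m) R) (hF : (F.map f).PosDef) (u : Fin m → R) :
    0 ≤ f (bilinForm F u u) := by
  rw [aux_map_bilin]
  simpa using hF.posSemidef.dotProduct_mulVec_nonneg (f ∘ u)

theorem aux_symm {m : ℕ} {R : Type*} [CommRing R]
    (F : Matrix (Fin m) (Fin m) R) (hF : F.IsSymm) (u v : Fin m → R) :
    bilinForm F u v = bilinForm F v u := by
  unfold bilinForm
  rw [dotProduct_comm, ← Matrix.vecMul_transpose, hF.eq, Matrix.dotProduct_mulVec]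

theorem aux_add {m : ℕ} {R : Type*} [CommRing R]
    (F : Matrix (Fin m) (Fin m) R) (hF : F.IsSymm) (u v : Fin m → R) :
    bilinForm F (u + v) (u + v)
      = bilinForm F u u + 2 * bilinForm F u v + bilinForm F v v := by
  have h1 : bilinForm F (u + v) (u + v)
      = bilinForm F u u + bilinForm F u v + (bilinForm F v u + bilinForm F v v) := by
    simp [bilinForm, Matrix.mulVec_add, add_dotProduct, dotProduct_add]
    ring
  rw [h1, aux_symm F hF v u]; ring

theorem aux_sub {m : ℕ} {R : Type*} [CommRing R]
    (F : Matrix (Fin m) (Fin m) R) (hF : F.IsSymm) (u v : Fin m → R) :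
    bilinForm F (u - v) (u - v)
      = bilinForm F u u - 2 * bilinForm F u v + bilinForm F v v := by
  have h1 : bilinForm F (u - v) (u - v)
      = bilinForm F u u - bilinForm F u v - (bilinForm F v u - bilinForm F v v) := by
    simp [bilinForm, Matrix.mulVec_sub, sub_dotProduct, dotProduct_sub]
    ring
  rw [h1, aux_symm F hF v u]; ring

theorem aux_orth {m : ℕ} {R : Type*} [CommRing R]
    (F H : Matrix (Fin m) (Fin m) R) (hH : Hᵀ * F * H = F) (u : Fin m → R) :
    bilinForm F (H.mulVec u) (H.mulVec u) = bilinForm F u u := by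
  unfold bilinForm
  conv_rhs => rw [← hH]
  rw [← Matrix.mulVec_mulVec, ← Matrix.mulVec_mulVec, Matrix.dotProduct_mulVec u,
    Matrix.vecMul_transpose]

theorem aux_cong {m : ℕ} {R : Type*} [CommRing R]
    (F H : Matrix (Fin m) (Fin m) R) (e : Fin m → R) (q : R)
    (hc : ∀ s t, (H - 1) s t ∈ Ideal.span {q}) :
    ∃ c, bilinForm F (H.mulVec e) e = bilinForm F e e + q * c := by
  simp only [Ideal.mem_span_singleton'] at hc
  choose M hM using hc
  have hH : H = 1 + q • Matrix.of M := by
    ext s t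
    have := hM s t
    simp only [Matrix.sub_apply] at this
    simp only [Matrix.add_apply, Matrix.smul_apply, Matrix.of_apply, smul_eq_mul]
    linear_combination -this
  refine ⟨bilinForm F ((Matrix.of M).mulVec e) e, ?_⟩
  subst hH
  simp only [bilinForm, Matrix.add_mulVec, add_dotProduct, Matrix.smul_mulVec,
    smul_dotProduct, Matrix.one_mulVec, smul_eq_mul]

/-- Self-separation estimate from the proof of the generalised Margulis–Vinberg lemma.
Let `K` be a totally real number field with real embeddings `σ 0, …, σ (d-1)` (the family
`σ` enumerates all of them without repetition and every complex embedding of `K` factors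
through one of them), with distinguished embedding `σ j₁`; positivity of elements of `K`
refers to images under `σ j₁`.  Let `F` be a symmetric matrix over `𝓞 K` of size `n+1`,
`n ≥ 2`, with `σ j (F)` positive definite for all `j ≠ j₁`.  Suppose
`e₀ ∈ 𝓞 K^{n+1}` satisfies `B(e₀,e₀) > 0`.  Then every `h ∈ O_F(𝓞 K)` congruent to the
identity modulo `2·B(e₀,e₀)` satisfies `|σ₁(B(h·e₀,e₀))| ≥ σ₁(B(e₀,e₀))`, and
consequently `B(h·e₀,e₀)² ≥ B(h·e₀,h·e₀)·B(e₀,e₀)`. -/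
theorem congruence_elements_keep_hyperplane_apart_from_itself
    (K : Type*) [Field K] [NumberField K]
    (d : ℕ) (σ : Fin d → (K →+* ℝ))
    (hσinj : Function.Injective σ)
    (hσall : ∀ τ : K →+* ℝ, ∃ j : Fin d, τ = σ j)
    (htotreal : ∀ φ : K →+* ℂ, ∃ j : Fin d, φ = Complex.ofRealHom.comp (σ j))
    (j₁ : Fin d)
    (n : ℕ) (hn : 2 ≤ n)
    (F : Matrix (Fin (n + 1)) (Fin (n + 1)) (NumberField.RingOfIntegers K))
    (hFsymm : F.IsSymm)
    (hFpos : ∀ j : Fin d, j ≠ j₁ → (F.map (embOK (σ j))).PosDef)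
    (e₀ : Fin (n + 1) → NumberField.RingOfIntegers K)
    (hpos₀ : 0 < embOK (σ j₁) (bilinForm F e₀ e₀))
    (h : GL (Fin (n + 1)) (NumberField.RingOfIntegers K))
    (hmem : h ∈ orthogonalSubgroup F)
    (hcong : ∀ s t : Fin (n + 1),
      ((h : Matrix (Fin (n + 1)) (Fin (n + 1)) (NumberField.RingOfIntegers K)) - 1) s t ∈
        Ideal.span {2 * bilinForm F e₀ e₀}) :
    |embOK (σ j₁) (bilinForm F
        ((h : Matrix (Fin (n + 1)) (Fin (n + 1)) (NumberField.RingOfIntegers K)).mulVec e₀)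
        e₀)| ≥ embOK (σ j₁) (bilinForm F e₀ e₀) ∧
    (embOK (σ j₁) (bilinForm F
        ((h : Matrix (Fin (n + 1)) (Fin (n + 1)) (NumberField.RingOfIntegers K)).mulVec e₀)
        e₀)) ^ 2 ≥
      embOK (σ j₁) (bilinForm F
        ((h : Matrix (Fin (n + 1)) (Fin (n + 1)) (NumberField.RingOfIntegers K)).mulVec e₀)
        ((h : Matrix (Fin (n + 1)) (Fin (n + 1)) (NumberField.RingOfIntegers K)).mulVec e₀)) *
      embOK (σ j₁) (bilinForm F e₀ e₀) := by
  have horth := aux_orth F _ hmem e₀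
  obtain ⟨c, hc⟩ := aux_cong F _ e₀ _ hcong
  set u := (h : Matrix (Fin (n + 1)) (Fin (n + 1)) (NumberField.RingOfIntegers K)).mulVec e₀
    with hu
  set a := bilinForm F e₀ e₀ with ha
  have key : |embOK (σ j₁) (bilinForm F u e₀)| ≥ embOK (σ j₁) a := by
    by_contra! hlt
    have ha0 : a ≠ 0 := by
      intro h0
      rw [h0, map_zero] at hpos₀
      exact lt_irrefl _ hpos₀
    have hinj : ∀ j, Function.Injective (embOK (σ j)) := fun j =>
      (σ j).injective.comp (FaithfulSMul.algebraMap_injective _ _)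
    -- for every embedding, `-1 ≤ σ c ≤ 0`
    have hall : ∀ j, 0 < embOK (σ j) a ∧
        |embOK (σ j) (bilinForm F u e₀)| ≤ embOK (σ j) a := by
      intro j
      by_cases hj : j = j₁
      · subst hj
        exact ⟨hpos₀, hlt.le⟩
      · have hp := hFpos j hj
        have h0 := aux_nonneg _ F hp e₀
        have h1 := aux_nonneg _ F hp (u + e₀)
        have h2 := aux_nonneg _ F hp (u - e₀)
        rw [aux_add F hFsymm, horth, ← ha] at h1
        rw [aux_sub F hFsymm, horth, ← ha] at h2
        simp only [map_add, map_sub, map_mul, map_ofNat] at h1 h2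
        refine ⟨lt_of_le_of_ne h0 ?_, abs_le.2 ⟨by linarith, by linarith⟩⟩
        intro h3
        exact ha0 (hinj j (by rw [map_zero]; exact h3.symm))
    have hbd : ∀ j, |embOK (σ j) (c * (c + 1))| < 1 := by
      intro j
      obtain ⟨hp, hb⟩ := hall j
      rw [hc] at hb
      simp only [map_add, map_mul, map_ofNat, map_one] at hb ⊢
      set x := embOK (σ j) a
      set y := embOK (σ j) c
      obtain ⟨hb1, hb2⟩ := abs_le.1 hb
      have hy0 : y ≤ 0 := by
        by_contra! hy
        nlinarith [mul_pos hp hy]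
      have hy1 : -1 ≤ y := by
        by_contra! hy
        nlinarith [mul_pos hp (show 0 < -1 - y by linarith)]
      rw [abs_lt]
      constructor
      · nlinarith [sq_nonneg (2 * y + 1)]
      · nlinarith
    have hplace : ∀ w : NumberField.InfinitePlace K, w ((c * (c + 1) :
        NumberField.RingOfIntegers K) : K) < 1 := by
      intro w
      obtain ⟨j, hj⟩ := htotreal w.embedding
      rw [← NumberField.InfinitePlace.norm_embedding_eq, hj]
      have := hbd j
      rw [RingHom.comp_apply, Complex.ofRealHom_eq_coe, Complex.norm_real, Real.norm_eq_abs]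
      exact this
    have hzero : c * (c + 1) = 0 := by
      by_contra hne
      obtain ⟨w⟩ := (inferInstance : Nonempty (NumberField.InfinitePlace K))
      exact absurd (NumberField.InfinitePlace.one_le_of_lt_one hne (fun z _ => hplace z))
        (not_le.2 (hplace w))
    rcases mul_eq_zero.1 hzero with h0 | h0
    · rw [hc, h0, mul_zero, add_zero, abs_of_pos hpos₀] at hlt
      exact lt_irrefl _ hlt
    · have hc1 : c = -1 := by linear_combination h0
      have hb : bilinForm F u e₀ = -a := by rw [hc, hc1]; ring
      rw [hb, map_neg, abs_neg, abs_of_pos hpos₀] at hlt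
      exact lt_irrefl _ hlt
  refine ⟨key, ?_⟩
  rw [horth, ← sq_abs]
  nlinarith

end
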